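/- arXiv:2009.02812 — 2 statements merged into one kernel-verified Lean document; each statement's English description precedes it below -/
import Mathlib

section
/- Assume k ≥ 3. In TL_k the following identity holds: (ae_2)T_1T_0T_1T_2 = t^{3/2}(ae_2)T_1^{−1}T_0^{−1}T_1^{−1}. -/
noncomputable section

open scoped BigOperators

namespace TwoBoundaryTL

variable (k : ℕ) (u u0 uk a a0 ak : ℂ)

/-- The free algebra on generators `T_i`, `i : ℕ` (only `i ≤ k` are used). -/
abbrev FA := FreeAlgebra ℂ ℕ

/-- The `i`-th generator of the free algebra. -/
def g (i : ℕ) : FA := FreeAlgebra.ι ℂ i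

/-- Scalars in the free algebra. -/
def cst (z : ℂ) : FA := algebraMap ℂ FA z

/-- The defining relations of the two-boundary Hecke algebra `H_k`, with parameters
`u = t^{1/2}`, `u0 = t_0^{1/2}`, `uk = t_k^{1/2}`. -/
inductive HeckeRel : FA → FA → Prop
  | quad0 : HeckeRel ((g 0 - cst u0) * (g 0 + cst u0⁻¹)) 0
  | quad (i : ℕ) (h1 : 1 ≤ i) (h2 : i ≤ k - 1) :
      HeckeRel ((g i - cst u) * (g i + cst u⁻¹)) 0
  | quadk : HeckeRel ((g k - cst uk) * (g k + cst uk⁻¹)) 0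
  | braid0 : HeckeRel (g 0 * g 1 * g 0 * g 1) (g 1 * g 0 * g 1 * g 0)
  | braidk : HeckeRel (g (k-1) * g k * g (k-1) * g k) (g k * g (k-1) * g k * g (k-1))
  | braid (i : ℕ) (h1 : 1 ≤ i) (h2 : i ≤ k - 2) :
      HeckeRel (g i * g (i+1) * g i) (g (i+1) * g i * g (i+1))
  | comm (i j : ℕ) (hij : i < j) (hj : j ≤ k) (h : 2 ≤ j - i) :
      HeckeRel (g i * g j) (g j * g i)

/-- The two-boundary Hecke algebra `H_k`. -/
def Hecke := RingQuot (HeckeRel k u u0 uk)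

instance : Ring (Hecke k u u0 uk) :=
  inferInstanceAs (Ring (RingQuot (HeckeRel k u u0 uk)))

instance : Algebra ℂ (Hecke k u u0 uk) :=
  inferInstanceAs (Algebra ℂ (RingQuot (HeckeRel k u u0 uk)))

/-- The generator `T_i` of `H_k`. -/
def T (i : ℕ) : Hecke k u u0 uk := RingQuot.mkAlgHom ℂ (HeckeRel k u u0 uk) (g i)

/-- Scalars in `H_k`. -/
def hc (z : ℂ) : Hecke k u u0 uk := algebraMap ℂ (Hecke k u u0 uk) z

/-- The inverse of `T_i`, given by the explicit formulas
`T_0⁻¹ = T_0 - (t_0^{1/2} - t_0^{-1/2})`, `T_i⁻¹ = T_i - (t^{1/2} - t^{-1/2})`,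
`T_k⁻¹ = T_k - (t_k^{1/2} - t_k^{-1/2})`. -/
def Tinv (i : ℕ) : Hecke k u u0 uk :=
  if i = 0 then T k u u0 uk 0 - hc k u u0 uk (u0 - u0⁻¹)
  else if i = k then T k u u0 uk k - hc k u u0 uk (uk - uk⁻¹)
  else T k u u0 uk i - hc k u u0 uk (u - u⁻¹)

/-- The elements `e_0 = a_0⁻¹(T_0 - t_0^{1/2})`, `e_i = a⁻¹(T_i - t^{1/2})` for `1 ≤ i ≤ k-1`,
`e_k = a_k⁻¹(T_k - t_k^{1/2})`. -/
def e (i : ℕ) : Hecke k u u0 uk :=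
  if i = 0 then a0⁻¹ • (T k u u0 uk 0 - hc k u u0 uk u0)
  else if i = k then ak⁻¹ • (T k u u0 uk k - hc k u u0 uk uk)
  else a⁻¹ • (T k u u0 uk i - hc k u u0 uk u)

/-- `W_1 = T_1⁻¹ T_2⁻¹ ⋯ T_{k-1}⁻¹ T_k T_{k-1} ⋯ T_2 T_1 T_0`. -/
def W1 : Hecke k u u0 uk :=
  ((List.range (k-1)).map (fun j => Tinv k u u0 uk (j+1))).prod *
    T k u u0 uk k *
    ((List.range (k-1)).reverse.map (fun j => T k u u0 uk (j+1))).prod *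
    T k u u0 uk 0

/-- The Murphy elements: `W_j = T_j W_{j-1} T_j` for `2 ≤ j ≤ k`. -/
def W : ℕ → Hecke k u u0 uk
  | 0 => 1
  | 1 => W1 k u u0 uk
  | j + 2 => T k u u0 uk (j + 2) * W (j + 1) * T k u u0 uk (j + 2)

/-- `W_1⁻¹ = T_0⁻¹ T_1⁻¹ ⋯ T_{k-1}⁻¹ T_k⁻¹ T_{k-1} ⋯ T_1`. -/
def W1inv : Hecke k u u0 uk :=
  Tinv k u u0 uk 0 *
    ((List.range (k-1)).map (fun j => Tinv k u u0 uk (j+1))).prod *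
    Tinv k u u0 uk k *
    ((List.range (k-1)).reverse.map (fun j => T k u u0 uk (j+1))).prod

/-- The inverses of the Murphy elements. -/
def Winv : ℕ → Hecke k u u0 uk
  | 0 => 1
  | 1 => W1inv k u u0 uk
  | j + 2 => Tinv k u u0 uk (j + 2) * Winv (j + 1) * Tinv k u u0 uk (j + 2)

/-- The central element `Z = W_1 + W_1⁻¹ + ⋯ + W_k + W_k⁻¹`. -/
def Z : Hecke k u u0 uk :=
  ∑ j ∈ Finset.range k, (W k u u0 uk (j + 1) + Winv k u u0 uk (j + 1))

/-- The relations defining the two-boundary Temperley–Lieb algebra as a quotient of `H_k`. -/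
inductive TLRel : Hecke k u u0 uk → Hecke k u u0 uk → Prop
  | braidA (i : ℕ) (h1 : 1 ≤ i) (h2 : i ≤ k - 2) :
      TLRel ((a ^ 3) • (e k u u0 uk a a0 ak i * e k u u0 uk a a0 ak (i+1) * e k u u0 uk a a0 ak i)
        - a • e k u u0 uk a a0 ak i) 0
  | braidB (i : ℕ) (h1 : 1 ≤ i) (h2 : i ≤ k - 2) :
      TLRel ((a ^ 3) • (e k u u0 uk a a0 ak (i+1) * e k u u0 uk a a0 ak i * e k u u0 uk a a0 ak (i+1))
        - a • e k u u0 uk a a0 ak (i+1)) 0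
  | bd0 :
      TLRel ((a0 * a ^ 2) • (e k u u0 uk a a0 ak 1 * e k u u0 uk a a0 ak 0 * e k u u0 uk a a0 ak 1)
        - (a * (u0⁻¹ * u + u0 * u⁻¹)) • e k u u0 uk a a0 ak 1) 0
  | bdk :
      TLRel ((ak * a ^ 2) • (e k u u0 uk a a0 ak (k-1) * e k u u0 uk a a0 ak k * e k u u0 uk a a0 ak (k-1))
        - (a * (uk⁻¹ * u + uk * u⁻¹)) • e k u u0 uk a a0 ak (k-1)) 0

/-- The two-boundary Temperley–Lieb algebra `TL_k`. -/
def TL := RingQuot (TLRel k u u0 uk a a0 ak)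

instance : Ring (TL k u u0 uk a a0 ak) :=
  inferInstanceAs (Ring (RingQuot (TLRel k u u0 uk a a0 ak)))

instance : Algebra ℂ (TL k u u0 uk a a0 ak) :=
  inferInstanceAs (Algebra ℂ (RingQuot (TLRel k u u0 uk a a0 ak)))

/-- The quotient map `H_k → TL_k`. -/
def π : Hecke k u u0 uk →ₐ[ℂ] TL k u u0 uk a a0 ak :=
  RingQuot.mkAlgHom ℂ (TLRel k u u0 uk a a0 ak)

/-- `I_1 = (ae_1)(ae_3)⋯(ae_{k-1})` for `k` even, `(ae_1)(ae_3)⋯(ae_{k-2})e_k` for `k` odd. -/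
def I1 : Hecke k u u0 uk :=
  if k % 2 = 0 then
    ((List.range (k / 2)).map (fun j => a • e k u u0 uk a a0 ak (2*j+1))).prod
  else
    ((List.range ((k-1) / 2)).map (fun j => a • e k u u0 uk a a0 ak (2*j+1))).prod *
      e k u u0 uk a a0 ak k

/-- `I_2 = e_0(ae_2)(ae_4)⋯(ae_{k-2})e_k` for `k` even, `e_0(ae_2)(ae_4)⋯(ae_{k-1})` for `k` odd. -/
def I2 : Hecke k u u0 uk :=
  if k % 2 = 0 then
    e k u u0 uk a a0 ak 0 *
      ((List.range (k / 2 - 1)).map (fun j => a • e k u u0 uk a a0 ak (2*j+2))).prod *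
      e k u u0 uk a a0 ak k
  else
    e k u u0 uk a a0 ak 0 *
      ((List.range ((k-1) / 2)).map (fun j => a • e k u u0 uk a a0 ak (2*j+2))).prod

/-- The quantum integer `[k] = (t^{1/2})^{-(k-1)}(1 + t + ⋯ + t^{k-1})`. -/
def qk : ℂ := (u⁻¹) ^ (k - 1) * ∑ j ∈ Finset.range k, (u ^ 2) ^ j


/-!
Write `u = t^{1/2}` and `E_i = T_i - t^{1/2}`, so that `E_i = a e_i` for `i = 1, 2`. Since
`E_2 E_1 E_2`, `E_2 T_1 E_2` and `E_1 T_0 E_1` are multiples of `E_2`, `E_2` and `E_1`, expanding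
the last factor `T_i = E_i + u` gives three flips
`E_2 T_1 T_2 = u E_2 E_1`, `E_1 T_0 T_1 = u E_1 T_0⁻¹`, `E_2 E_1 T_2 = u E_2 T_1⁻¹`.
Multiply `E_2 T_1 T_0 T_1 T_2` on the right by `T_1`. The braid relation and the commutation of
`T_0` with `T_2` turn it into `(E_2 T_1 T_2) T_0 T_1 T_2`, and the flips, applied in this order,
carry that to `u³ E_2 T_1⁻¹ T_0⁻¹`.
-/

section FlipIdentities

variable {R A : Type*} [CommRing R] [Ring A] [Algebra R A]

/-- The quadratic Hecke relation with eigenvalues `q` and `-q'`. Taking `q'` as a parameter of its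
own, in place of `q⁻¹`, keeps the flip identities free of divisions. -/
def IsHecke (q q' : R) (x : A) : Prop :=
  (x - algebraMap R A q) * (x + algebraMap R A q') = 0

/-- The unnormalised Temperley–Lieb generator of a Hecke generator `x`: it is `a e_i` for `x = T_i`
with `1 ≤ i < k`, and `a_0 e_0` for `x = T_0`. -/
def tlGen (q : R) (x : A) : A := x - algebraMap R A q

/-- The dual of a Hecke generator with eigenvalues `q` and `-q'`, which is its inverse when
`q * q' = 1`. -/
def heckeDual (q q' : R) (x : A) : A := x - algebraMap R A (q - q')

theorem IsHecke.map {B : Type*} [Ring B] [Algebra R B] (f : A →ₐ[R] B) {q q' : R} {x : A}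
    (hx : IsHecke q q' x) : IsHecke q q' (f x) := by
  simpa only [IsHecke, map_mul, map_sub, map_add, map_zero, AlgHom.commutes] using congrArg f hx

theorem map_tlGen {B : Type*} [Ring B] [Algebra R B] (f : A →ₐ[R] B) (q : R) (x : A) :
    f (tlGen q x) = tlGen q (f x) := by
  simp only [tlGen, map_sub, AlgHom.commutes]

theorem map_heckeDual {B : Type*} [Ring B] [Algebra R B] (f : A →ₐ[R] B) (q q' : R) (x : A) :
    f (heckeDual q q' x) = heckeDual q q' (f x) := by
  simp only [heckeDual, map_sub, AlgHom.commutes]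

theorem tlGen_add_algebraMap (q d : R) (x : A) :
    tlGen q x + algebraMap R A d = heckeDual q d x := by
  simp only [tlGen, heckeDual, map_sub]
  abel

theorem add_algebraMap_sub (q q' : R) (x : A) :
    x + algebraMap R A (q' - q) = heckeDual q q' x := by
  simp only [heckeDual, map_sub]
  abel

theorem IsHecke.tlGen_mul_tlGen {q q' : R} {x : A} (hx : IsHecke q q' x) :
    tlGen q x * tlGen q x = -(q + q') • tlGen q x := by
  have hE : tlGen q x * (x + algebraMap R A q') = 0 := hx
  calc tlGen q x * tlGen q x
      = tlGen q x * (x + algebraMap R A q') - tlGen q x * algebraMap R A (q + q') := by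
        rw [← mul_sub, map_add, add_sub_add_right_eq_sub]; rfl
    _ = -(q + q') • tlGen q x := by
        rw [hE, zero_sub, ← Algebra.commutes, ← Algebra.smul_def, neg_smul]

theorem IsHecke.mul_heckeDual {q q' : R} {x : A} (hx : IsHecke q q' x) :
    x * heckeDual q q' x = algebraMap R A (q * q') := by
  rw [← sub_eq_zero, ← hx]
  simp only [heckeDual, Algebra.algebraMap_eq_smul_one]
  noncomm_ring
  module

/-- The common source of the three flips: write the last factor as `x = tlGen q x + q`. -/
theorem tlGen_mul_mul_of_sandwich {q d : R} {x y : A}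
    (h : tlGen q x * y * tlGen q x = (q * d) • tlGen q x) :
    tlGen q x * y * x = q • (tlGen q x * (y + algebraMap R A d)) := by
  have hx : x = tlGen q x + algebraMap R A q := (sub_add_cancel _ _).symm
  calc tlGen q x * y * x
      = tlGen q x * y * tlGen q x + tlGen q x * y * algebraMap R A q := by
        rw [← mul_add, ← hx]
    _ = q • (tlGen q x * (y + algebraMap R A d)) := by
        rw [h, ← Algebra.commutes, ← Algebra.smul_def, mul_add, ← Algebra.commutes d,
          ← Algebra.smul_def, smul_add, mul_smul, add_comm]

theorem tlGen_mul_tlGen_mul {q q' : R} {x y : A}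
    (hxyx : tlGen q x * tlGen q y * tlGen q x = (q * q') • tlGen q x) :
    tlGen q x * tlGen q y * x = q • (tlGen q x * heckeDual q q' y) := by
  rw [tlGen_mul_mul_of_sandwich hxyx, tlGen_add_algebraMap]

theorem IsHecke.tlGen_mul_mul_tlGen {q q' r d : R} {x y : A} (hx : IsHecke q q' x)
    (hxyx : tlGen q x * tlGen r y * tlGen q x = d • tlGen q x) :
    tlGen q x * y * tlGen q x = (d - r * (q + q')) • tlGen q x := by
  calc tlGen q x * y * tlGen q x
      = tlGen q x * tlGen r y * tlGen q x + r • (tlGen q x * tlGen q x) := by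
        rw [show tlGen r y = y - algebraMap R A r from rfl, mul_sub, sub_mul,
          ← Algebra.commutes, ← Algebra.smul_def, smul_mul_assoc, sub_add_cancel]
    _ = (d - r * (q + q')) • tlGen q x := by
        rw [hxyx, hx.tlGen_mul_tlGen]
        module

theorem IsHecke.tlGen_mul_mul {q q' : R} {x y : A} (hx : IsHecke q q' x)
    (hxyx : tlGen q x * tlGen q y * tlGen q x = (q * q') • tlGen q x) :
    tlGen q x * y * x = q • (tlGen q x * tlGen q y) := by
  have h : tlGen q x * y * tlGen q x = (q * -q) • tlGen q x := by
    rw [hx.tlGen_mul_mul_tlGen hxyx]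
    ring_nf
  rw [tlGen_mul_mul_of_sandwich h, map_neg, ← sub_eq_add_neg, ← tlGen]

theorem IsHecke.tlGen_mul_boundary_mul {q q' q₀ q₀' : R} {x y : A} (hx : IsHecke q q' x)
    (hxyx : tlGen q x * tlGen q₀ y * tlGen q x = (q₀' * q + q₀ * q') • tlGen q x) :
    tlGen q x * y * x = q • (tlGen q x * heckeDual q₀ q₀' y) := by
  have h : tlGen q x * y * tlGen q x = (q * (q₀' - q₀)) • tlGen q x := by
    rw [hx.tlGen_mul_mul_tlGen hxyx]
    ring_nf
  rw [tlGen_mul_mul_of_sandwich h, add_algebraMap_sub]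

variable {q q' q₀ q₀' : R} {T₀ T₁ T₂ : A}

theorem tlGen_pole_flip_mul_self (h₁ : IsHecke q q' T₁) (h₂ : IsHecke q q' T₂)
    (braid : T₁ * T₂ * T₁ = T₂ * T₁ * T₂) (comm : Commute T₀ T₂)
    (h₂₁₂ : tlGen q T₂ * tlGen q T₁ * tlGen q T₂ = (q * q') • tlGen q T₂)
    (h₁₀₁ : tlGen q T₁ * tlGen q₀ T₀ * tlGen q T₁ = (q₀' * q + q₀ * q') • tlGen q T₁) :
    tlGen q T₂ * T₁ * T₀ * T₁ * T₂ * T₁ =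
      q ^ 3 • (tlGen q T₂ * heckeDual q q' T₁ * heckeDual q₀ q₀' T₀) := by
  have comm' : Commute (heckeDual q₀ q₀' T₀) T₂ :=
    comm.sub_left (Algebra.commute_algebraMap_left _ _)
  calc tlGen q T₂ * T₁ * T₀ * T₁ * T₂ * T₁
      = tlGen q T₂ * T₁ * T₀ * (T₁ * T₂ * T₁) := by simp only [mul_assoc]
    _ = tlGen q T₂ * T₁ * (T₀ * T₂) * T₁ * T₂ := by simp only [braid, mul_assoc]
    _ = (tlGen q T₂ * T₁ * T₂) * T₀ * T₁ * T₂ := by simp only [comm.eq, mul_assoc]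
    _ = q • (tlGen q T₂ * (tlGen q T₁ * T₀ * T₁) * T₂) := by
        simp only [h₂.tlGen_mul_mul h₂₁₂, smul_mul_assoc, mul_assoc]
    _ = q ^ 2 • (tlGen q T₂ * tlGen q T₁ * (heckeDual q₀ q₀' T₀ * T₂)) := by
        simp only [h₁.tlGen_mul_boundary_mul h₁₀₁, mul_smul_comm, smul_mul_assoc, smul_smul,
          mul_assoc, sq]
    _ = q ^ 2 • ((tlGen q T₂ * tlGen q T₁ * T₂) * heckeDual q₀ q₀' T₀) := by
        simp only [comm'.eq, mul_assoc]
    _ = q ^ 3 • (tlGen q T₂ * heckeDual q q' T₁ * heckeDual q₀ q₀' T₀) := by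
        rw [tlGen_mul_tlGen_mul h₂₁₂, smul_mul_assoc, smul_smul, ← pow_succ]

theorem tlGen_pole_flip (hq : q * q' = 1) (h₁ : IsHecke q q' T₁) (h₂ : IsHecke q q' T₂)
    (braid : T₁ * T₂ * T₁ = T₂ * T₁ * T₂) (comm : Commute T₀ T₂)
    (h₂₁₂ : tlGen q T₂ * tlGen q T₁ * tlGen q T₂ = tlGen q T₂)
    (h₁₀₁ : tlGen q T₁ * tlGen q₀ T₀ * tlGen q T₁ = (q₀' * q + q₀ * q') • tlGen q T₁) :
    tlGen q T₂ * T₁ * T₀ * T₁ * T₂ =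
      q ^ 3 • (tlGen q T₂ * heckeDual q q' T₁ * heckeDual q₀ q₀' T₀ * heckeDual q q' T₁) := by
  have inv : T₁ * heckeDual q q' T₁ = 1 := by rw [h₁.mul_heckeDual, hq, map_one]
  have h₂₁₂' : tlGen q T₂ * tlGen q T₁ * tlGen q T₂ = (q * q') • tlGen q T₂ := by
    rw [h₂₁₂, hq, one_smul]
  calc tlGen q T₂ * T₁ * T₀ * T₁ * T₂
      = tlGen q T₂ * T₁ * T₀ * T₁ * T₂ * T₁ * heckeDual q q' T₁ := by
        rw [mul_assoc _ T₁ (heckeDual q q' T₁), inv, mul_one]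
    _ = q ^ 3 • (tlGen q T₂ * heckeDual q q' T₁ * heckeDual q₀ q₀' T₀ * heckeDual q q' T₁) := by
        rw [tlGen_pole_flip_mul_self h₁ h₂ braid comm h₂₁₂' h₁₀₁, smul_mul_assoc]

end FlipIdentities

section Presentation

variable {k u u0 uk a a0 ak}

theorem isHecke_T {i : ℕ} (h1 : 1 ≤ i) (h2 : i ≤ k - 1) : IsHecke u u⁻¹ (T k u u0 uk i) := by
  have h := RingQuot.mkAlgHom_rel ℂ (HeckeRel.quad (u := u) (u0 := u0) (uk := uk) i h1 h2)
  simp only [map_mul, map_sub, map_add, map_zero, cst, AlgHom.commutes] at h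
  exact h

theorem T_braid {i : ℕ} (h1 : 1 ≤ i) (h2 : i ≤ k - 2) :
    T k u u0 uk i * T k u u0 uk (i + 1) * T k u u0 uk i =
      T k u u0 uk (i + 1) * T k u u0 uk i * T k u u0 uk (i + 1) := by
  have h := RingQuot.mkAlgHom_rel ℂ (HeckeRel.braid (u := u) (u0 := u0) (uk := uk) i h1 h2)
  simp only [map_mul] at h
  exact h

theorem commute_T {i j : ℕ} (hij : i + 2 ≤ j) (hj : j ≤ k) :
    Commute (T k u u0 uk i) (T k u u0 uk j) := by
  have h := RingQuot.mkAlgHom_rel ℂ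
    (HeckeRel.comm (u := u) (u0 := u0) (uk := uk) i j (by omega) hj (by omega))
  rwa [map_mul, map_mul] at h

theorem Tinv_zero : Tinv k u u0 uk 0 = heckeDual u0 u0⁻¹ (T k u u0 uk 0) := rfl

theorem Tinv_eq_heckeDual {i : ℕ} (h1 : 1 ≤ i) (h2 : i ≤ k - 1) :
    Tinv k u u0 uk i = heckeDual u u⁻¹ (T k u u0 uk i) := by
  rw [Tinv, if_neg (by omega), if_neg (by omega)]
  rfl

theorem smul_e_zero (ha0 : a0 ≠ 0) :
    a0 • e k u u0 uk a a0 ak 0 = tlGen u0 (T k u u0 uk 0) := by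
  rw [e, if_pos rfl, smul_inv_smul₀ ha0]
  rfl

theorem smul_e (ha : a ≠ 0) {i : ℕ} (h1 : 1 ≤ i) (h2 : i ≤ k - 1) :
    a • e k u u0 uk a a0 ak i = tlGen u (T k u u0 uk i) := by
  rw [e, if_neg (by omega), if_neg (by omega), smul_inv_smul₀ ha]
  rfl

theorem tlGen_succ_mul_tlGen_mul_tlGen_succ (ha : a ≠ 0) {i : ℕ} (h1 : 1 ≤ i) (h2 : i ≤ k - 2) :
    tlGen u (π k u u0 uk a a0 ak (T k u u0 uk (i + 1))) *
        tlGen u (π k u u0 uk a a0 ak (T k u u0 uk i)) *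
        tlGen u (π k u u0 uk a a0 ak (T k u u0 uk (i + 1))) =
      tlGen u (π k u u0 uk a a0 ak (T k u u0 uk (i + 1))) := by
  have h : π k u u0 uk a a0 ak _ = π k u u0 uk a a0 ak 0 :=
    RingQuot.mkAlgHom_rel ℂ (TLRel.braidB (a := a) (a0 := a0) (ak := ak) i h1 h2)
  rw [map_zero, map_sub, sub_eq_zero] at h
  have he : a • e k u u0 uk a a0 ak i = tlGen u (T k u u0 uk i) := smul_e ha h1 (by omega)
  have he' : a • e k u u0 uk a a0 ak (i + 1) = tlGen u (T k u u0 uk (i + 1)) :=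
    smul_e ha (by omega) (by omega)
  simp only [← map_tlGen, ← map_mul, ← he, ← he']
  rw [← h]
  simp only [smul_mul_assoc, mul_smul_comm, smul_smul, pow_three]

theorem tlGen_one_mul_tlGen_zero_mul_tlGen_one (hk : 2 ≤ k) (ha : a ≠ 0) (ha0 : a0 ≠ 0) :
    tlGen u (π k u u0 uk a a0 ak (T k u u0 uk 1)) *
        tlGen u0 (π k u u0 uk a a0 ak (T k u u0 uk 0)) *
        tlGen u (π k u u0 uk a a0 ak (T k u u0 uk 1)) =
      (u0⁻¹ * u + u0 * u⁻¹) • tlGen u (π k u u0 uk a a0 ak (T k u u0 uk 1)) := by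
  have h : π k u u0 uk a a0 ak _ = π k u u0 uk a a0 ak 0 :=
    RingQuot.mkAlgHom_rel ℂ (TLRel.bd0 (k := k) (u := u) (u0 := u0) (a := a) (a0 := a0))
  rw [map_zero, map_sub, sub_eq_zero] at h
  have he₀ : a0 • e k u u0 uk a a0 ak 0 = tlGen u0 (T k u u0 uk 0) := smul_e_zero ha0
  have he₁ : a • e k u u0 uk a a0 ak 1 = tlGen u (T k u u0 uk 1) := smul_e ha le_rfl (by omega)
  simp only [← map_tlGen, ← map_mul, ← map_smul, ← he₀, ← he₁]
  convert h using 2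
  · simp only [smul_mul_assoc, mul_smul_comm, smul_smul]
    ring_nf
  · rw [smul_smul, mul_comm]

end Presentation

/-- the odd left pole flip identity in `TL_k`. -/
theorem statement14 (k : ℕ) (hk : 3 ≤ k) (u u0 uk a a0 ak : ℂ)
    (hu : u ≠ 0) (hu0 : u0 ≠ 0) (huk : uk ≠ 0) (ha : a ≠ 0) (ha0 : a0 ≠ 0) (hak : ak ≠ 0) :
    π k u u0 uk a a0 ak ((a • e k u u0 uk a a0 ak 2) * T k u u0 uk 1 * T k u u0 uk 0 *
        T k u u0 uk 1 * T k u u0 uk 2)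
      = (u ^ 3) • π k u u0 uk a a0 ak ((a • e k u u0 uk a a0 ak 2) * Tinv k u u0 uk 1 *
          Tinv k u u0 uk 0 * Tinv k u u0 uk 1) := by
  have one_le : 1 ≤ k - 1 := by omega
  have two_le : 2 ≤ k - 1 := by omega
  have braid := congrArg (π k u u0 uk a a0 ak) (T_braid le_rfl (by omega : 1 ≤ k - 2))
  rw [smul_e ha one_le_two two_le, Tinv_zero,
    Tinv_eq_heckeDual le_rfl one_le]
  simp only [map_mul, map_tlGen, map_heckeDual] at braid ⊢
  exact tlGen_pole_flip (mul_inv_cancel₀ hu)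
    ((isHecke_T le_rfl one_le).map _) ((isHecke_T one_le_two two_le).map _)
    braid ((commute_T le_rfl (by omega)).map _)
    (tlGen_succ_mul_tlGen_mul_tlGen_succ ha le_rfl (by omega))
    (tlGen_one_mul_tlGen_zero_mul_tlGen_one (by omega) ha ha0)

end TwoBoundaryTL
end
end

section
/- Let k ≥ 2 be even. In TL_k the following identities hold (with the convention that the products (ae_2)(ae_4)⋯(ae_{k−2}) are empty when k = 2): (i) I_1·(ae_2)(ae_4)⋯(ae_{k−2})e_k·I_1 = a_k^{−1}(t_k^{1/2}t^{−1/2} + t_k^{−1/2}t^{1/2})·I_1; (ii) I_1·e_0(ae_2)(ae_4)⋯(ae_{k−2})·I_1 = a_0^{−1}(t_0^{1/2}t^{−1/2} + t_0^{−1/2}t^{1/2})·I_1; (iii) I_1·(ae_2)(ae_4)⋯(ae_{k−2})·I_1 = −(t^{1/2} + t^{−1/2})·I_1. -/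
noncomputable section

open scoped BigOperators

namespace TwoBoundaryTL

variable (k : ℕ) (u u0 uk a a0 ak : ℂ)

/-!
Put `x_i = a e_i`, `A = x_1 x_3 ⋯ x_{k-1}` and `B = x_2 x_4 ⋯ x_{k-2}`. If `z` commutes with `A'` and
`P'` and `z w z = z`, then `(A' z) (P' w) (A' z) = (A' P' A') z`. Taking for `z` and `w` the last
factors of `A` and of `P = c B`, repeatedly, reduces `A (c B) A` to `x_1 c x_1` times the other
factors of `A`. With `c = e_0` the defining relation of `e_0` yields the scalar of (ii); with `c = 1`
the quadratic relation of `T_1` yields that of (iii). Absorbing the factors of `B` from the left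
instead reduces `A (B e_k) A` to `x_{k-1} e_k x_{k-1}`, hence (i).
-/

section AlternatingProducts

variable {M : Type*} [Monoid M]

theorem sandwich_absorb_right {A P w z : M} (hA : Commute z A) (hP : Commute z P)
    (hzwz : z * w * z = z) : A * z * (P * w) * (A * z) = A * P * A * z :=
  calc A * z * (P * w) * (A * z) = A * (z * P) * w * (A * z) := by simp only [mul_assoc]
    _ = A * P * (z * w * z) * A := by rw [hP.eq, ← hA.eq]; simp only [mul_assoc]
    _ = A * P * A * z := by rw [hzwz, mul_assoc, hA.eq, ← mul_assoc]

theorem sandwich_absorb_left {A P w z : M} (hA : Commute z A) (hP : Commute z P)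
    (hzwz : z * w * z = z) : z * A * (w * P) * (z * A) = z * (A * P * A) :=
  calc z * A * (w * P) * (z * A) = A * z * w * (P * z) * A := by
        nth_rw 1 [hA.eq]; simp only [mul_assoc]
    _ = A * (z * w * z) * P * A := by rw [← hP.eq]; simp only [mul_assoc]
    _ = z * (A * P * A) := by rw [hzwz, ← hA.eq]; simp only [mul_assoc]

/-- The product `x 0 * x 2 * ⋯ * x (2 * (n - 1))` of `n` every-other terms of a sequence. The
products `(ae_1)(ae_3)⋯` and `(ae_2)(ae_4)⋯` arise from the sequence `ae_1, ae_2, …` and its shift. -/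
def alternateProd (x : ℕ → M) (n : ℕ) : M :=
  ((List.range n).map fun j => x (2 * j)).prod

theorem alternateProd_zero (x : ℕ → M) : alternateProd x 0 = 1 := rfl

theorem alternateProd_succ (x : ℕ → M) (n : ℕ) :
    alternateProd x (n + 1) = alternateProd x n * x (2 * n) := by
  simp [alternateProd, List.range_succ]

theorem alternateProd_succ' (x : ℕ → M) (n : ℕ) :
    alternateProd x (n + 1) = x 0 * alternateProd (fun i => x (i + 2)) n := by
  simp [alternateProd, List.range_succ_eq_map, Function.comp_def, mul_add]

theorem alternateProd_one (x : ℕ → M) : alternateProd x 1 = x 0 := by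
  rw [alternateProd_succ, alternateProd_zero, one_mul]

theorem commute_alternateProd {x : ℕ → M} {y : M} {n : ℕ}
    (h : ∀ j < n, Commute y (x (2 * j))) : Commute y (alternateProd x n) :=
  Commute.list_prod_right _ _ (by simpa using h)

variable {S : Type*} [SMul S M]

theorem alternateProd_sandwich_left [IsScalarTower S M M] {x : ℕ → M} {c : M} {l : S} {n : ℕ}
    (hc : ∀ j < n, Commute (x (2 * j + 2)) c)
    (hl : x 0 * c * x 0 = l • x 0)
    (hcomm : ∀ i j, i + 2 ≤ j → j ≤ 2 * n → Commute (x i) (x j))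
    (hx : ∀ j < n, x (2 * j + 2) * x (2 * j + 1) * x (2 * j + 2) = x (2 * j + 2)) :
    alternateProd x (n + 1) * (c * alternateProd (fun i => x (i + 1)) n) * alternateProd x (n + 1)
      = l • alternateProd x (n + 1) := by
  induction n with
  | zero => simpa only [zero_add, alternateProd_one, alternateProd_zero, mul_one] using hl
  | succ n ih =>
    have hA : Commute (x (2 * (n + 1))) (alternateProd x (n + 1)) :=
      commute_alternateProd fun j hj => (hcomm _ _ (by lia) le_rfl).symm
    have hB : Commute (x (2 * (n + 1))) (alternateProd (fun i => x (i + 1)) n) :=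
      commute_alternateProd fun j hj => (hcomm _ _ (by lia) le_rfl).symm
    rw [alternateProd_succ x (n + 1), alternateProd_succ (fun i => x (i + 1)) n, ← mul_assoc c,
      sandwich_absorb_right hA ((hc n n.lt_succ_self).mul_right hB) (hx n n.lt_succ_self),
      ih (fun j hj => hc j (by lia)) (fun i j hij hj => hcomm i j hij (by lia))
        (fun j hj => hx j (by lia)), smul_mul_assoc]

theorem alternateProd_sandwich_right [SMulCommClass S M M] {x : ℕ → M} {c : M} {l : S} {n : ℕ}
    (hc : ∀ j < n, Commute (x (2 * j)) c)
    (hl : x (2 * n) * c * x (2 * n) = l • x (2 * n))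
    (hcomm : ∀ i j, i + 2 ≤ j → j ≤ 2 * n → Commute (x i) (x j))
    (hx : ∀ j < n, x (2 * j) * x (2 * j + 1) * x (2 * j) = x (2 * j)) :
    alternateProd x (n + 1) * (alternateProd (fun i => x (i + 1)) n * c) * alternateProd x (n + 1)
      = l • alternateProd x (n + 1) := by
  induction n generalizing x with
  | zero => simpa only [zero_add, alternateProd_one, alternateProd_zero, one_mul] using hl
  | succ n ih =>
    have hA : Commute (x 0) (alternateProd (fun i => x (i + 2)) (n + 1)) :=
      commute_alternateProd fun j hj => hcomm _ _ (by lia) (by lia)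
    have hB : Commute (x 0) (alternateProd (fun i => x (i + 2 + 1)) n) :=
      commute_alternateProd fun j hj => hcomm _ _ (by lia) (by lia)
    rw [alternateProd_succ' x (n + 1), alternateProd_succ' (fun i => x (i + 1)) n, mul_assoc _ _ c,
      sandwich_absorb_left hA (hB.mul_right (hc 0 n.succ_pos)) (hx 0 n.succ_pos),
      ih (fun j hj => hc (j + 1) (by lia)) hl
        (fun i j hij hj => hcomm (i + 2) (j + 2) (by lia) (by lia))
        (fun j hj => hx (j + 1) (by lia)), mul_smul_comm]

end AlternatingProducts

section Relations

local notation "𝐓" => T k u u0 uk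
local notation "𝐞" => e k u u0 uk a a0 ak
local notation "𝛑" => π k u u0 uk a a0 ak

theorem T_commute {i j : ℕ} (hij : i + 2 ≤ j) (hj : j ≤ k) : Commute (𝐓 i) (𝐓 j) := by
  have h := RingQuot.mkAlgHom_rel ℂ
    (HeckeRel.comm (k := k) (u := u) (u0 := u0) (uk := uk) i j (by lia) hj (by lia))
  rwa [map_mul, map_mul] at h

theorem T_quadratic {i : ℕ} (hi : 1 ≤ i) (hik : i ≤ k - 1) :
    (𝐓 i - hc k u u0 uk u) * (𝐓 i + hc k u u0 uk u⁻¹) = 0 := by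
  have h := RingQuot.mkAlgHom_rel ℂ
    (HeckeRel.quad (k := k) (u := u) (u0 := u0) (uk := uk) i hi hik)
  rwa [map_mul, map_sub, map_add, map_zero, cst, cst, AlgHom.commutes, AlgHom.commutes] at h

theorem exists_e_eq_smul_T_sub (i : ℕ) : ∃ p q : ℂ, 𝐞 i = p • (𝐓 i - hc k u u0 uk q) := by
  unfold e
  split_ifs with h0 hk
  · exact ⟨_, _, by rw [h0]⟩
  · exact ⟨_, _, by rw [hk]⟩
  · exact ⟨_, _, rfl⟩

theorem e_commute {i j : ℕ} (hij : i + 2 ≤ j) (hj : j ≤ k) : Commute (𝐞 i) (𝐞 j) := by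
  obtain ⟨p, q, hi⟩ := exists_e_eq_smul_T_sub k u u0 uk a a0 ak i
  obtain ⟨p', q', hj'⟩ := exists_e_eq_smul_T_sub k u u0 uk a a0 ak j
  rw [hi, hj']
  have hT : Commute (𝐓 i) (𝐓 j - hc k u u0 uk q') :=
    (T_commute k u u0 uk hij hj).sub_right (Algebra.commute_algebraMap_right _ _)
  exact ((hT.sub_left (Algebra.commute_algebraMap_left _ _)).smul_right _).smul_left _

variable {a} in
theorem smul_e_eq_T_sub (ha : a ≠ 0) {i : ℕ} (hi : 1 ≤ i) (hik : i ≤ k - 1) :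
    a • 𝐞 i = 𝐓 i - hc k u u0 uk u := by
  rw [e, if_neg (by lia), if_neg (by lia), smul_inv_smul₀ ha]

variable {a} in
theorem smul_e_mul_self (ha : a ≠ 0) {i : ℕ} (hi : 1 ≤ i) (hik : i ≤ k - 1) :
    (a • 𝐞 i) * (a • 𝐞 i) = (-(u + u⁻¹)) • (a • 𝐞 i) := by
  have hT : 𝐓 i - hc k u u0 uk u = (𝐓 i + hc k u u0 uk u⁻¹) + hc k u u0 uk (-(u + u⁻¹)) := by
    simp only [hc, map_neg, map_add]; abel
  rw [smul_e_eq_T_sub k u u0 uk a0 ak ha hi hik]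
  nth_rewrite 2 [hT]
  rw [mul_add, T_quadratic k u u0 uk hi hik, zero_add, Algebra.smul_def]
  exact (Algebra.commutes _ _).symm

variable {k u u0 uk a a0 ak} in
theorem smul_π_eq_of_TLRel {p q : ℂ} {v w : Hecke k u u0 uk}
    (h : TLRel k u u0 uk a a0 ak (p • v - q • w) 0) : p • 𝛑 v = q • 𝛑 w := by
  have hπ : 𝛑 (p • v - q • w) = 𝛑 0 := RingQuot.mkAlgHom_rel ℂ h
  rwa [map_sub, map_zero, sub_eq_zero, map_smul, map_smul] at hπ

/-- The image of `ae_{i+1}` in `TL_k`. The index is shifted so that the non-boundary generators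
`ae_1, …, ae_{k-1}` form a sequence starting at `0`. -/
def bulkGen (i : ℕ) : TL k u u0 uk a a0 ak := 𝛑 (a • 𝐞 (i + 1))

local notation "𝐱" => bulkGen k u u0 uk a a0 ak

theorem π_I1_even (n : ℕ) :
    π (2 * n + 2) u u0 uk a a0 ak (I1 (2 * n + 2) u u0 uk a a0 ak)
      = alternateProd (bulkGen (2 * n + 2) u u0 uk a a0 ak) (n + 1) := by
  rw [I1, if_pos (by lia), map_list_prod, List.map_map, show (2 * n + 2) / 2 = n + 1 by lia]
  rfl

theorem bulkGen_commute {i j : ℕ} (hij : i + 2 ≤ j) (hj : j + 1 ≤ k) : Commute (𝐱 i) (𝐱 j) :=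
  (((e_commute k u u0 uk a a0 ak (by lia) hj).smul_right a).smul_left a).map 𝛑

theorem bulkGen_commute_e_zero {i : ℕ} (hi : 1 ≤ i) (hik : i + 1 ≤ k) :
    Commute (𝐱 i) (𝛑 (𝐞 0)) :=
  ((e_commute k u u0 uk a a0 ak (by lia) hik).symm.smul_left a).map 𝛑

theorem bulkGen_commute_e_last {i : ℕ} (hi : i + 3 ≤ k) : Commute (𝐱 i) (𝛑 (𝐞 k)) :=
  ((e_commute k u u0 uk a a0 ak (by lia) le_rfl).smul_left a).map 𝛑

theorem bulkGen_mul_mul_bulkGen (i j : ℕ) (y : Hecke k u u0 uk) :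
    𝐱 i * 𝛑 y * 𝐱 j = a ^ 2 • 𝛑 (𝐞 (i + 1) * y * 𝐞 (j + 1)) := by
  simp only [bulkGen, map_mul, map_smul, smul_mul_assoc, mul_smul_comm, smul_smul, sq]

theorem bulkGen_mul_succ_mul {i : ℕ} (hi : i + 3 ≤ k) : 𝐱 i * 𝐱 (i + 1) * 𝐱 i = 𝐱 i := by
  have h := smul_π_eq_of_TLRel (TLRel.braidA (u := u) (u0 := u0) (uk := uk) (a := a) (a0 := a0)
    (ak := ak) (i + 1) (by lia) (by lia : i + 1 ≤ k - 2))
  rw [bulkGen.eq_def _ _ _ _ _ _ _ (i + 1), bulkGen_mul_mul_bulkGen, mul_smul_comm, smul_mul_assoc,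
    map_smul, smul_smul, ← pow_succ, h, ← map_smul, bulkGen]

theorem bulkGen_succ_mul_mul_succ {i : ℕ} (hi : i + 3 ≤ k) :
    𝐱 (i + 1) * 𝐱 i * 𝐱 (i + 1) = 𝐱 (i + 1) := by
  have h := smul_π_eq_of_TLRel (TLRel.braidB (u := u) (u0 := u0) (uk := uk) (a := a) (a0 := a0)
    (ak := ak) (i + 1) (by lia) (by lia : i + 1 ≤ k - 2))
  rw [bulkGen.eq_def _ _ _ _ _ _ _ i, bulkGen_mul_mul_bulkGen, mul_smul_comm, smul_mul_assoc,
    map_smul, smul_smul, ← pow_succ, h, ← map_smul, bulkGen]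

variable {a} in
theorem bulkGen_mul_self (ha : a ≠ 0) {i : ℕ} (hi : i + 2 ≤ k) :
    𝐱 i * 𝐱 i = (-(u + u⁻¹)) • 𝐱 i := by
  rw [bulkGen, ← map_mul, smul_e_mul_self k u u0 uk a0 ak ha (by lia) (by lia), map_smul]

variable {a0} in
theorem bulkGen_mul_e_zero_mul (ha0 : a0 ≠ 0) :
    𝐱 0 * 𝛑 (𝐞 0) * 𝐱 0 = (a0⁻¹ * (u0 * u⁻¹ + u0⁻¹ * u)) • 𝐱 0 := by
  have h := smul_π_eq_of_TLRel (TLRel.bd0 (k := k) (u := u) (u0 := u0) (uk := uk) (a := a)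
    (a0 := a0) (ak := ak))
  rw [mul_smul, ← eq_inv_smul_iff₀ ha0] at h
  rw [bulkGen_mul_mul_bulkGen, h, bulkGen, map_smul, smul_smul, smul_smul]
  congr 1
  ring

variable {ak} in
theorem bulkGen_mul_e_last_mul (hak : ak ≠ 0) {i : ℕ} (hi : i + 2 = k) :
    𝐱 i * 𝛑 (𝐞 k) * 𝐱 i = (ak⁻¹ * (uk * u⁻¹ + uk⁻¹ * u)) • 𝐱 i := by
  have h := smul_π_eq_of_TLRel (TLRel.bdk (k := k) (u := u) (u0 := u0) (uk := uk) (a := a)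
    (a0 := a0) (ak := ak))
  rw [mul_smul, ← eq_inv_smul_iff₀ hak, show k - 1 = i + 1 by lia] at h
  rw [bulkGen_mul_mul_bulkGen, h, bulkGen, map_smul, smul_smul, smul_smul]
  congr 1
  ring

end Relations

/-- the identities `L^even`, `M^even`, `P^even` in `TL_k`, for `k` even. -/
theorem statement16 (k : ℕ) (hk : 2 ≤ k) (hke : k % 2 = 0) (u u0 uk a a0 ak : ℂ)
    (hu : u ≠ 0) (hu0 : u0 ≠ 0) (huk : uk ≠ 0) (ha : a ≠ 0) (ha0 : a0 ≠ 0) (hak : ak ≠ 0)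
    (P1 : Hecke k u u0 uk)
    (hP1 : P1 = ((List.range (k / 2 - 1)).map (fun j => a • e k u u0 uk a a0 ak (2*j+2))).prod) :
    π k u u0 uk a a0 ak (I1 k u u0 uk a a0 ak * (P1 * e k u u0 uk a a0 ak k) *
        I1 k u u0 uk a a0 ak)
      = (ak⁻¹ * (uk * u⁻¹ + uk⁻¹ * u)) • π k u u0 uk a a0 ak (I1 k u u0 uk a a0 ak) ∧
    π k u u0 uk a a0 ak (I1 k u u0 uk a a0 ak * (e k u u0 uk a a0 ak 0 * P1) *
        I1 k u u0 uk a a0 ak)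
      = (a0⁻¹ * (u0 * u⁻¹ + u0⁻¹ * u)) • π k u u0 uk a a0 ak (I1 k u u0 uk a a0 ak) ∧
    π k u u0 uk a a0 ak (I1 k u u0 uk a a0 ak * P1 * I1 k u u0 uk a a0 ak)
      = (-(u + u⁻¹)) • π k u u0 uk a a0 ak (I1 k u u0 uk a a0 ak) := by
  obtain ⟨n, rfl⟩ : ∃ n, k = 2 * n + 2 := ⟨k / 2 - 1, by lia⟩
  have hP : π (2 * n + 2) u u0 uk a a0 ak P1
      = alternateProd (fun i => bulkGen (2 * n + 2) u u0 uk a a0 ak (i + 1)) n := by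
    rw [hP1, map_list_prod, List.map_map, show (2 * n + 2) / 2 - 1 = n by lia]
    rfl
  have hcomm (i j : ℕ) (hij : i + 2 ≤ j) (hj : j ≤ 2 * n) :=
    bulkGen_commute (2 * n + 2) u u0 uk a a0 ak hij (by lia)
  have hsucc (j : ℕ) (hj : j < n) :=
    bulkGen_succ_mul_mul_succ (2 * n + 2) u u0 uk a a0 ak (i := 2 * j + 1) (by lia)
  simp only [map_mul, π_I1_even, hP]
  refine ⟨?_, ?_, ?_⟩
  · exact alternateProd_sandwich_right
      (fun j hj => bulkGen_commute_e_last _ _ _ _ _ _ _ (by lia))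
      (bulkGen_mul_e_last_mul _ _ _ _ _ _ hak rfl) hcomm
      (fun j hj => bulkGen_mul_succ_mul _ _ _ _ _ _ _ (by lia))
  · exact alternateProd_sandwich_left
      (fun j hj => bulkGen_commute_e_zero _ _ _ _ _ _ _ (by lia) (by lia))
      (bulkGen_mul_e_zero_mul _ _ _ _ _ _ ha0) hcomm hsucc
  · rw [← one_mul (alternateProd (fun i => bulkGen _ _ _ _ _ _ _ (i + 1)) n)]
    refine alternateProd_sandwich_left (fun _ _ => Commute.one_right _) ?_ hcomm hsucc
    rw [mul_one, bulkGen_mul_self _ _ _ _ _ _ ha (by lia)]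

end TwoBoundaryTL
end
end
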